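/- arXiv:1310.4450 — 2 statements merged into one kernel-verified Lean document; each statement's English description precedes it below -/
import Mathlib

section
/- (Conservation law for symmetries on the tangent space.) Let F : ℝⁿ × ℝⁿ → ℝ be a Finsler function that is continuous on ℝⁿ × ℝⁿ and C^∞ on ℝⁿ × (ℝⁿ ∖ {0}). Let A, B : ℝⁿ × ℝⁿ → ℝⁿ be C¹ maps (the horizontal and vertical components of a vector field X = Aᵘ ∂/∂xᵘ + Bᵘ ∂/∂yᵘ on the tangent space) and suppose the Lie derivative of the Hilbert form along X vanishes, i.e. for every (x, v) with v ≠ 0: (i) D_x(D_yF)(x, v)(A(x, v)) + D_y(D_yF)(x, v)(B(x, v)) + D_yF(x, v) ∘ ∂_xA(x, v) = 0 as covectors, and (ii) D_yF(x, v) ∘ ∂_yA(x, v) = 0, where ∂_xA(x, v), ∂_yA(x, v) : ℝⁿ → ℝⁿ are the partial Fréchet derivatives of A. Then for every C^∞ curve σ with σ′ ≠ 0 on [t₁, t₂] that satisfies the Euler–Lagrange equations of F on [t₁, t₂], the function t ↦ D_yF(σ(t), σ′(t))(A(σ(t), σ′(t))) is constant on [t₁, t₂]. -/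
/-- The Euler–Lagrange covector of a Finsler function `F` along a curve `σ`. -/
noncomputable def eulerLagrange (n : ℕ)
    (F : EuclideanSpace ℝ (Fin n) × EuclideanSpace ℝ (Fin n) → ℝ)
    (σ : ℝ → EuclideanSpace ℝ (Fin n)) (t : ℝ) (h : EuclideanSpace ℝ (Fin n)) : ℝ :=
  (fderiv ℝ (fun x => fderiv ℝ (fun y => F (x, y)) (deriv σ t)) (σ t)) h (deriv σ t)
    - deriv (fun s => fderiv ℝ (fun y => F (σ s, y)) (deriv σ s) h) t

/-!
Write `θ = D_yF` for the coefficients of the Hilbert form, `c = (σ, σ′)` for the lift of the curve,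
`X = (A, B)` for the vector field and `E` for the Euler–Lagrange covector. Comparing the product
rule for `θ(A)` along `c` with the definition of the Lie derivative gives, for every curve and every
Lagrangian `F`, the off-shell Noether identity
`d/dt θ(A) = (L_X 𝓕)(c′) - D_yθ(B)(σ′) - E(A)`.
For a Finsler function the middle term is zero: differentiating Euler's identity `D_yF(v)(v) = F(v)`
shows that `v` is in the kernel of the fibre Hessian `D_yθ` at `v`.
-/

theorem fderiv_apply_eq_add_partial {𝕜 E V G : Type*} [NontriviallyNormedField 𝕜]
    [NormedAddCommGroup E] [NormedSpace 𝕜 E] [NormedAddCommGroup V] [NormedSpace 𝕜 V]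
    [NormedAddCommGroup G] [NormedSpace 𝕜 G] {f : E × V → G} {p : E × V}
    (hf : DifferentiableAt 𝕜 f p) (w : E × V) :
    fderiv 𝕜 f p w =
      fderiv 𝕜 (fun x => f (x, p.2)) p.1 w.1 + fderiv 𝕜 (fun y => f (p.1, y)) p.2 w.2 := by
  have hleft : HasFDerivAt (fun x => f (x, p.2)) _ p.1 :=
    hf.hasFDerivAt.comp p.1 (hasFDerivAt_prodMk_left p.1 p.2)
  have hright : HasFDerivAt (fun y => f (p.1, y)) _ p.2 :=
    hf.hasFDerivAt.comp p.2 (hasFDerivAt_prodMk_right p.1 p.2)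
  rw [hleft.fderiv, hright.fderiv]
  simp [← map_add]

section PosHomogeneous

open scoped Topology

variable {E G : Type*} [NormedAddCommGroup E] [NormedSpace ℝ E]
  [NormedAddCommGroup G] [NormedSpace ℝ G] {f : E → G} {y : E}

theorem fderiv_apply_self_of_posHomogeneous
    (hhom : ∀ l : ℝ, 0 < l → f (l • y) = l • f y) (hf : DifferentiableAt ℝ f y) :
    fderiv ℝ f y y = f y := by
  have hray : HasDerivAt (fun l : ℝ => l • y) y 1 := by
    simpa using (hasDerivAt_id (1 : ℝ)).smul_const y
  have hchain : HasDerivAt (fun l : ℝ => f (l • y)) (fderiv ℝ f y y) 1 :=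
    HasFDerivAt.comp_hasDerivAt (1 : ℝ) (by simpa using hf.hasFDerivAt) hray
  have hlinear : HasDerivAt (fun l : ℝ => l • f y) (f y) 1 := by
    simpa using (hasDerivAt_id (1 : ℝ)).smul_const (f y)
  have hrays : (fun l : ℝ => f (l • y)) =ᶠ[𝓝 1] fun l => l • f y :=
    (lt_mem_nhds zero_lt_one).mono hhom
  exact hchain.unique (hlinear.congr_of_eventuallyEq hrays)

theorem fderiv_fderiv_apply_self_of_posHomogeneous
    (hhom : ∀ (w : E) (l : ℝ), 0 < l → f (l • w) = l • f w) (hf : ContDiffAt ℝ 2 f y) (b : E) :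
    fderiv ℝ (fderiv ℝ f) y b y = 0 := by
  have hf' : DifferentiableAt ℝ (fderiv ℝ f) y :=
    (hf.fderiv_right (m := 1) (by norm_num)).differentiableAt one_ne_zero
  have heuler : (fun w => fderiv ℝ f w w) =ᶠ[𝓝 y] f :=
    (hf.eventually (by simp)).mono fun w hw =>
      fderiv_apply_self_of_posHomogeneous (hhom w) (hw.differentiableAt two_ne_zero)
  have hproduct := hf'.hasFDerivAt.clm_apply (hasFDerivAt_id y)
  have hderiv := hproduct.unique
    ((hf.differentiableAt two_ne_zero).hasFDerivAt.congr_of_eventuallyEq heuler)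
  simpa using DFunLike.congr_fun hderiv b

end PosHomogeneous

section Noether

open scoped Topology

variable {E : Type*} [NormedAddCommGroup E] [NormedSpace ℝ E]
  {F : E × E → ℝ} {A B : E × E → E} {σ : ℝ → E} {p : E × E} {t : ℝ}

/-- The Hilbert form `(∂F/∂yᵘ) dxᵘ` of `F`. It has no `dy` component, so it is encoded by its
coefficient covector `D_yF(p)`, which acts on the horizontal component of a tangent vector. -/
noncomputable def hilbertForm (F : E × E → ℝ) (p : E × E) : E →L[ℝ] ℝ :=
  fderiv ℝ (fun y => F (p.1, y)) p.2

/-- The Lie derivative of the Hilbert form of `F` along the vector field `(A, B)` on `E × E`, by the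
formula `(L_X α)(w) = (Dα(X))(w) + α(DX(w))`; only the horizontal component `A` of `X` enters the
second term, because the Hilbert form has no `dy` component. -/
noncomputable def lieDerivHilbertForm (F : E × E → ℝ) (A B : E × E → E) (p : E × E) :
    E × E →L[ℝ] ℝ :=
  fderiv ℝ (hilbertForm F) p (A p, B p) ∘L .fst ℝ E E + hilbertForm F p ∘L fderiv ℝ A p

/-- The Euler–Lagrange covector of `F` along `σ` in an arbitrary normed space; on Euclidean space it
unfolds to `eulerLagrange`. -/
noncomputable def eulerLagrangeCovector (F : E × E → ℝ) (σ : ℝ → E) (t : ℝ) (h : E) : ℝ :=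
  fderiv ℝ (fun x => hilbertForm F (x, deriv σ t)) (σ t) h (deriv σ t)
    - deriv (fun s => hilbertForm F (σ s, deriv σ s) h) t

theorem differentiableAt_hilbertForm (hF : ContDiffAt ℝ 2 F p) :
    DifferentiableAt ℝ (hilbertForm F) p := by
  have hjoint : ContDiffAt ℝ 2 (fun q : (E × E) × E => F (q.1.1, q.2)) (p, p.2) :=
    hF.comp (p, p.2) (by fun_prop : ContDiffAt ℝ 2 (fun q : (E × E) × E => (q.1.1, q.2)) _)
  have hC1 : ContDiffAt ℝ 1 (hilbertForm F) p :=
    ContDiffAt.fderiv (f := fun q y => F (q.1, y)) hjoint contDiffAt_snd (by norm_num)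
  exact hC1.differentiableAt one_ne_zero

theorem lieDerivHilbertForm_apply (hF : DifferentiableAt ℝ (hilbertForm F) p)
    (hA : DifferentiableAt ℝ A p) (w : E × E) :
    lieDerivHilbertForm F A B p w =
      fderiv ℝ (fun x => hilbertForm F (x, p.2)) p.1 (A p) w.1
        + fderiv ℝ (fun y => hilbertForm F (p.1, y)) p.2 (B p) w.1
        + hilbertForm F p (fderiv ℝ (fun x => A (x, p.2)) p.1 w.1)
        + hilbertForm F p (fderiv ℝ (fun y => A (p.1, y)) p.2 w.2) := by
  simp only [lieDerivHilbertForm, fderiv_apply_eq_add_partial hF, fderiv_apply_eq_add_partial hA,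
    add_apply, ContinuousLinearMap.comp_apply, ContinuousLinearMap.coe_fst', map_add, add_assoc]

theorem lieDerivHilbertForm_eq_zero_iff (hF : DifferentiableAt ℝ (hilbertForm F) p)
    (hA : DifferentiableAt ℝ A p) :
    lieDerivHilbertForm F A B p = 0 ↔
      (∀ h : E, fderiv ℝ (fun x => hilbertForm F (x, p.2)) p.1 (A p) h
        + fderiv ℝ (fun y => hilbertForm F (p.1, y)) p.2 (B p) h
        + hilbertForm F p (fderiv ℝ (fun x => A (x, p.2)) p.1 h) = 0) ∧
      ∀ h : E, hilbertForm F p (fderiv ℝ (fun y => A (p.1, y)) p.2 h) = 0 := by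
  refine ⟨fun hzero => ⟨fun h => ?_, fun h => ?_⟩, fun ⟨hhor, hver⟩ => ?_⟩
  · simpa [hzero] using (lieDerivHilbertForm_apply (B := B) hF hA (h, 0)).symm
  · simpa [hzero] using (lieDerivHilbertForm_apply (B := B) hF hA (0, h)).symm
  · refine ContinuousLinearMap.ext fun w => ?_
    rw [lieDerivHilbertForm_apply hF hA, hhor, hver, add_zero, zero_apply]

theorem hasDerivAt_hilbertForm_apply_along_curve
    (hF : DifferentiableAt ℝ (hilbertForm F) (σ t, deriv σ t))
    (hA : DifferentiableAt ℝ A (σ t, deriv σ t))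
    (hσ : DifferentiableAt ℝ σ t) (hσ' : DifferentiableAt ℝ (deriv σ) t) :
    HasDerivAt (fun s => hilbertForm F (σ s, deriv σ s) (A (σ s, deriv σ s)))
      (lieDerivHilbertForm F A B (σ t, deriv σ t) (deriv σ t, deriv (deriv σ) t)
        - fderiv ℝ (fun y => hilbertForm F (σ t, y)) (deriv σ t) (B (σ t, deriv σ t)) (deriv σ t)
        - eulerLagrangeCovector F σ t (A (σ t, deriv σ t))) t := by
  have hlift := hσ.hasDerivAt.prodMk hσ'.hasDerivAt
  have hform := hF.hasFDerivAt.comp_hasDerivAt t hlift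
  have hmomentum (h : E) : deriv (fun s => hilbertForm F (σ s, deriv σ s) h) t =
      fderiv ℝ (hilbertForm F) (σ t, deriv σ t) (deriv σ t, deriv (deriv σ) t) h := by
    simpa using (hform.clm_apply (hasDerivAt_const t h)).deriv
  refine (hform.clm_apply (hA.hasFDerivAt.comp_hasDerivAt t hlift)).congr_deriv ?_
  simp only [lieDerivHilbertForm, eulerLagrangeCovector, hmomentum, Function.comp_apply,
    fderiv_apply_eq_add_partial hF (A _, B _), add_apply, ContinuousLinearMap.comp_apply,
    ContinuousLinearMap.coe_fst']
  ring

theorem conservation_law_tangent_space_symmetry_general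
    (hhom : ∀ (x y : E) (l : ℝ), 0 < l → F (x, l • y) = l * F (x, y))
    (hF : ContDiffOn ℝ 2 F {p | p.2 ≠ 0}) (hA : DifferentiableOn ℝ A {p | p.2 ≠ 0})
    (hinv : ∀ p : E × E, p.2 ≠ 0 → lieDerivHilbertForm F A B p = 0)
    {t₁ t₂ : ℝ} (hσ : ∀ t ∈ Set.Icc t₁ t₂, DifferentiableAt ℝ σ t)
    (hσ' : ∀ t ∈ Set.Icc t₁ t₂, DifferentiableAt ℝ (deriv σ) t)
    (hreg : ∀ t ∈ Set.Icc t₁ t₂, deriv σ t ≠ 0)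
    (hEL : ∀ t ∈ Set.Icc t₁ t₂, ∀ h : E, eulerLagrangeCovector F σ t h = 0) :
    ∀ t ∈ Set.Icc t₁ t₂, ∀ t' ∈ Set.Icc t₁ t₂,
      hilbertForm F (σ t, deriv σ t) (A (σ t, deriv σ t)) =
        hilbertForm F (σ t', deriv σ t') (A (σ t', deriv σ t')) := by
  have hstationary : ∀ t ∈ Set.Icc t₁ t₂,
      HasDerivAt (fun s => hilbertForm F (σ s, deriv σ s) (A (σ s, deriv σ s))) 0 t := by
    intro t ht
    have hmem : {p : E × E | p.2 ≠ 0} ∈ 𝓝 (σ t, deriv σ t) :=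
      continuousAt_snd.eventually_ne (hreg t ht)
    have hFt := hF.contDiffAt hmem
    have hhess : fderiv ℝ (fun y => hilbertForm F (σ t, y)) (deriv σ t)
        (B (σ t, deriv σ t)) (deriv σ t) = 0 :=
      fderiv_fderiv_apply_self_of_posHomogeneous (f := fun y => F (σ t, y)) (hhom (σ t))
        (hFt.comp (deriv σ t) (contDiffAt_const.prodMk contDiffAt_id)) _
    simpa [hinv (σ t, deriv σ t) (hreg t ht), hhess, hEL t ht] using
      hasDerivAt_hilbertForm_apply_along_curve (B := B) (differentiableAt_hilbertForm hFt)
        (hA.differentiableAt hmem) (hσ t ht) (hσ' t ht)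
  have hconst := constant_of_has_deriv_right_zero
    (fun t ht => (hstationary t ht).continuousAt.continuousWithinAt)
    fun t ht => (hstationary t (Set.Ico_subset_Icc_self ht)).hasDerivWithinAt
  exact fun t ht t' ht' => (hconst t ht).trans (hconst t' ht').symm

end Noether

/-- **Conservation law for symmetries of the Hilbert form on the tangent space.**
If the Lie derivative of the Hilbert form along a vector field
`X = Aᵘ ∂/∂xᵘ + Bᵘ ∂/∂yᵘ` on the tangent space vanishes, then along every extremal the
function `t ↦ D_yF(σ t, σ′ t)(A(σ t, σ′ t))` is constant. -/
theorem conservation_law_tangent_space_symmetry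
    (n : ℕ) (F : EuclideanSpace ℝ (Fin n) × EuclideanSpace ℝ (Fin n) → ℝ)
    (hhom : ∀ (x y : EuclideanSpace ℝ (Fin n)) (l : ℝ), 0 < l → F (x, l • y) = l * F (x, y))
    (hFcont : Continuous F)
    (hFsmooth : ContDiffOn ℝ (⊤ : ℕ∞) F
      {p : EuclideanSpace ℝ (Fin n) × EuclideanSpace ℝ (Fin n) | p.2 ≠ 0})
    (A B : EuclideanSpace ℝ (Fin n) × EuclideanSpace ℝ (Fin n) → EuclideanSpace ℝ (Fin n))
    (hA : ContDiff ℝ 1 A) (hB : ContDiff ℝ 1 B)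
    (hinv₁ : ∀ (x v : EuclideanSpace ℝ (Fin n)), v ≠ 0 →
      ∀ h : EuclideanSpace ℝ (Fin n),
        (fderiv ℝ (fun x' => fderiv ℝ (fun y => F (x', y)) v) x) (A (x, v)) h
          + (fderiv ℝ (fun v' => fderiv ℝ (fun y => F (x, y)) v') v) (B (x, v)) h
          + fderiv ℝ (fun y => F (x, y)) v (fderiv ℝ (fun x' => A (x', v)) x h) = 0)
    (hinv₂ : ∀ (x v : EuclideanSpace ℝ (Fin n)), v ≠ 0 →
      ∀ h : EuclideanSpace ℝ (Fin n),
        fderiv ℝ (fun y => F (x, y)) v (fderiv ℝ (fun v' => A (x, v')) v h) = 0)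
    (t₁ t₂ : ℝ) (σ : ℝ → EuclideanSpace ℝ (Fin n)) (hσ : ContDiff ℝ (⊤ : ℕ∞) σ)
    (hreg : ∀ t ∈ Set.Icc t₁ t₂, deriv σ t ≠ 0)
    (hEL : ∀ t ∈ Set.Icc t₁ t₂, ∀ h : EuclideanSpace ℝ (Fin n), eulerLagrange n F σ t h = 0) :
    ∀ t ∈ Set.Icc t₁ t₂, ∀ t' ∈ Set.Icc t₁ t₂,
      fderiv ℝ (fun y => F (σ t, y)) (deriv σ t) (A (σ t, deriv σ t)) =
        fderiv ℝ (fun y => F (σ t', y)) (deriv σ t') (A (σ t', deriv σ t')) := by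
  have hF := hFsmooth.of_le (m := 2) (by norm_cast)
  have hA' := hA.differentiable one_ne_zero
  refine conservation_law_tangent_space_symmetry_general hhom hF hA'.differentiableOn
    (fun p hp => (lieDerivHilbertForm_eq_zero_iff (B := B) ?_ (hA' p)).2
      ⟨hinv₁ p.1 p.2 hp, hinv₂ p.1 p.2 hp⟩)
    (fun t _ => hσ.differentiable (by simp) t)
    (fun t _ => (contDiff_infty_iff_deriv.1 hσ).2.differentiable (by simp) t) hreg hEL
  exact differentiableAt_hilbertForm (hF.contDiffAt (continuousAt_snd.eventually_ne hp))
end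

section
/- (Integral first variation formula, first-order mechanics.) Let F : ℝⁿ × ℝⁿ → ℝ be a Finsler function that is continuous on ℝⁿ × ℝⁿ and C^∞ on ℝⁿ × (ℝⁿ ∖ {0}). Let t₁ < t₂ and σ : ℝ → ℝⁿ be C^∞ with σ′(t) ≠ 0 for all t ∈ [t₁, t₂]. Let γ : ℝ × ℝ → ℝⁿ be C^∞ with γ(0, t) = σ(t) for all t ∈ [t₁, t₂], and set δ(t) := ∂γ/∂s(0, t). Then the function A(s) := ∫_{t₁}^{t₂} F(γ(s, t), ∂γ/∂t(s, t)) dt is differentiable at s = 0 and A′(0) = ∫_{t₁}^{t₂} E(t)(δ(t)) dt + D_yF(σ(t₂), σ′(t₂))(δ(t₂)) − D_yF(σ(t₁), σ′(t₁))(δ(t₁)), where E(t) is the Euler–Lagrange covector of F along σ. -/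
open intervalIntegral

/-!
For an arbitrary Lagrangian `L`, differentiation under the integral sign, the symmetry
`∂ₛ∂ₜγ = ∂ₜ∂ₛγ` and an integration by parts give the first variation formula with the classical
Euler–Lagrange covector `D_xL - d/dt D_yL`. For a positively homogeneous `F`, Euler's identity
`D_yF(x, y)(y) = F(x, y)`, differentiated in `x`, reads `D_x(D_yF)(h)(y) = D_xF(h)`, so that the
classical covector agrees with the Finslerian one.
-/

section PartialDerivatives

open Filter
open scoped Topology

variable {𝕜 E G W : Type*} [NontriviallyNormedField 𝕜]
  [NormedAddCommGroup E] [NormedSpace 𝕜 E] [NormedAddCommGroup G] [NormedSpace 𝕜 G]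
  [NormedAddCommGroup W] [NormedSpace 𝕜 W]

theorem fderiv_apply_prodMk {f : E × G → W} {x : E} {y : G} (hf : DifferentiableAt 𝕜 f (x, y))
    (h : E) (k : G) :
    fderiv 𝕜 f (x, y) (h, k) =
      fderiv 𝕜 (fun x => f (x, y)) x h + fderiv 𝕜 (fun y => f (x, y)) y k := by
  have hx : fderiv 𝕜 (fun x => f (x, y)) x = (fderiv 𝕜 f (x, y)).comp (.inl 𝕜 E G) :=
    (hf.hasFDerivAt.comp x (hasFDerivAt_prodMk_left x y)).fderiv
  have hy : fderiv 𝕜 (fun y => f (x, y)) y = (fderiv 𝕜 f (x, y)).comp (.inr 𝕜 E G) :=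
    (hf.hasFDerivAt.comp y (hasFDerivAt_prodMk_right x y)).fderiv
  simp [hx, hy, ← map_add]

variable {γ : 𝕜 × 𝕜 → E} {s t : 𝕜} {m n : WithTop ℕ∞}

theorem deriv_prodMk_left (hγ : DifferentiableAt 𝕜 γ (s, t)) :
    deriv (fun s => γ (s, t)) s = fderiv 𝕜 γ (s, t) (1, 0) :=
  (hγ.hasFDerivAt.comp_hasDerivAt s ((hasDerivAt_id s).prodMk (hasDerivAt_const s t))).deriv

theorem deriv_prodMk_right (hγ : DifferentiableAt 𝕜 γ (s, t)) :
    deriv (fun t => γ (s, t)) t = fderiv 𝕜 γ (s, t) (0, 1) :=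
  (hγ.hasFDerivAt.comp_hasDerivAt t ((hasDerivAt_const t s).prodMk (hasDerivAt_id t))).deriv

theorem contDiffAt_deriv_prodMk_left (hγ : ContDiffAt 𝕜 n γ (s, t)) (hmn : m + 1 ≤ n) :
    ContDiffAt 𝕜 m (fun q : 𝕜 × 𝕜 => deriv (fun s => γ (s, q.2)) q.1) (s, t) := by
  refine ContDiffAt.clm_apply (ContDiffAt.fderiv (n := n) ?_ contDiffAt_fst hmn) contDiffAt_const
  exact ContDiffAt.comp ((s, t), s) (g := γ) (f := fun p : (𝕜 × 𝕜) × 𝕜 => (p.2, p.1.2)) hγ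
    (by fun_prop)

theorem contDiffAt_deriv_prodMk_right (hγ : ContDiffAt 𝕜 n γ (s, t)) (hmn : m + 1 ≤ n) :
    ContDiffAt 𝕜 m (fun q : 𝕜 × 𝕜 => deriv (fun t => γ (q.1, t)) q.2) (s, t) := by
  refine ContDiffAt.clm_apply (ContDiffAt.fderiv (n := n) ?_ contDiffAt_snd hmn) contDiffAt_const
  exact ContDiffAt.comp ((s, t), t) (g := γ) (f := fun p : (𝕜 × 𝕜) × 𝕜 => (p.1.1, p.2)) hγ
    (by fun_prop)

theorem deriv_deriv_prodMk_comm (hγ : ContDiffAt 𝕜 n γ (s, t)) (hn : minSmoothness 𝕜 2 ≤ n) :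
    deriv (fun s => deriv (fun t => γ (s, t)) t) s =
      deriv (fun t => deriv (fun s => γ (s, t)) s) t := by
  have h2 : 2 ≤ n := le_minSmoothness.trans hn
  have hdiff : ∀ᶠ q in 𝓝 (s, t), DifferentiableAt 𝕜 γ q :=
    ((hγ.of_le h2).eventually (by simp)).mono fun q hq => hq.differentiableAt two_ne_zero
  have hd2 : DifferentiableAt 𝕜 (fderiv 𝕜 γ) (s, t) :=
    (hγ.fderiv_right (m := 1) (by rwa [one_add_one_eq_two])).differentiableAt one_ne_zero
  have hright : (fun s => deriv (fun t => γ (s, t)) t) =ᶠ[𝓝 s]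
      fun s => fderiv 𝕜 γ (s, t) (0, 1) :=
    (hdiff.curry_nhds.mono fun _ h => h.self_of_nhds).mono fun _ => deriv_prodMk_right
  have hleft : (fun t => deriv (fun s => γ (s, t)) s) =ᶠ[𝓝 t]
      fun t => fderiv 𝕜 γ (s, t) (1, 0) :=
    hdiff.curry_nhds.self_of_nhds.mono fun _ => deriv_prodMk_left
  rw [hright.deriv_eq, hleft.deriv_eq,
    deriv_prodMk_left (γ := fun q => fderiv 𝕜 γ q (0, 1)) (by fun_prop),
    deriv_prodMk_right (γ := fun q => fderiv 𝕜 γ q (1, 0)) (by fun_prop),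
    fderiv_clm_apply hd2 (by fun_prop), fderiv_clm_apply hd2 (by fun_prop)]
  simpa using hγ.isSymmSndFDerivAt hn (1, 0) (0, 1)

end PartialDerivatives

section ParametricIntegral

open Filter MeasureTheory
open scoped Topology Interval

theorem hasDerivAt_intervalIntegral_of_contDiffAt {W : Type*} [NormedAddCommGroup W]
    [NormedSpace ℝ W] {G : ℝ × ℝ → W} {a b s₀ : ℝ}
    (hG : ∀ t ∈ [[a, b]], ContDiffAt ℝ 1 G (s₀, t)) :
    HasDerivAt (fun s => ∫ t in a..b, G (s, t)) (∫ t in a..b, deriv (fun s => G (s, t)) s₀) s₀ := by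
  have hG' : ∀ t ∈ [[a, b]],
      ContinuousAt (fun q : ℝ × ℝ => deriv (fun s => G (s, q.2)) q.1) (s₀, t) := fun t ht =>
    (contDiffAt_deriv_prodMk_left (m := 0) (hG t ht) (by simp)).continuousAt
  have hslice : ∀ t, ContinuousAt (fun t : ℝ => (s₀, t)) t := fun t => by fun_prop
  have hG'₀ : ContinuousOn (fun t => deriv (fun s => G (s, t)) s₀) [[a, b]] := fun t ht =>
    ((hG' t ht).comp (f := fun t => (s₀, t)) (hslice t)).continuousWithinAt
  obtain ⟨C, hC⟩ := isCompact_uIcc.exists_bound_of_continuousOn hG'₀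
  have hsmooth : ∀ᶠ s in 𝓝 s₀, ∀ t ∈ [[a, b]], ContDiffAt ℝ 1 G (s, t) :=
    isCompact_uIcc.eventually_forall_of_forall_eventually fun t ht =>
      (hG t ht).eventually (by simp)
  have hbound : ∀ᶠ s in 𝓝 s₀, ∀ t ∈ [[a, b]], ‖deriv (fun s => G (s, t)) s‖ ≤ C + 1 :=
    isCompact_uIcc.eventually_forall_of_forall_eventually fun t ht =>
      ((hG' t ht).norm.eventually_lt_const ((hC t ht).trans_lt (lt_add_one C))).mono
        fun _ => le_of_lt
  have hcont : ∀ᶠ s in 𝓝 s₀, ContinuousOn (fun t => G (s, t)) [[a, b]] :=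
    hsmooth.mono fun s hs t ht => ((hs t ht).continuousAt.comp
      (f := fun t => (s, t)) (by fun_prop)).continuousWithinAt
  refine (hasDerivAt_integral_of_dominated_loc_of_deriv_le (μ := volume)
    (F' := fun s t => deriv (fun s => G (s, t)) s) (bound := fun _ => C + 1)
    (hsmooth.and hbound) ?_ hcont.self_of_nhds.intervalIntegrable ?_ ?_
    intervalIntegrable_const ?_).2
  · exact hcont.mono fun s hs =>
      (hs.mono Set.uIoc_subset_uIcc).aestronglyMeasurable measurableSet_uIoc
  · exact (hG'₀.mono Set.uIoc_subset_uIcc).aestronglyMeasurable measurableSet_uIoc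
  · exact .of_forall fun t ht s hs => hs.2 t (Set.uIoc_subset_uIcc ht)
  · refine .of_forall fun t ht s hs => DifferentiableAt.hasDerivAt ?_
    exact ((hs.1 t (Set.uIoc_subset_uIcc ht)).differentiableAt one_ne_zero).comp
      (f := fun s => (s, t)) s (by fun_prop)

end ParametricIntegral

section Lagrangian

open scoped Interval

variable {E : Type*} [NormedAddCommGroup E] [NormedSpace ℝ E]

/-- The conjugate momentum `D_yL(c(t), c′(t))` of a Lagrangian `L` along a curve `c`. -/
noncomputable def conjugateMomentum (L : E × E → ℝ) (c : ℝ → E) (t : ℝ) : E →L[ℝ] ℝ :=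
  fderiv ℝ (fun y => L (c t, y)) (deriv c t)

/-- The Euler–Lagrange covector `D_xL - d/dt D_yL` of a Lagrangian `L`, not assumed homogeneous,
along a curve `c`. -/
noncomputable def lagrangianCovector (L : E × E → ℝ) (c : ℝ → E) (t : ℝ) : E →L[ℝ] ℝ :=
  fderiv ℝ (fun x => L (x, deriv c t)) (c t) - deriv (conjugateMomentum L c) t

variable {L : E × E → ℝ} {c : ℝ → E} {t : ℝ} {m n : WithTop ℕ∞}

theorem contDiffAt_conjugateMomentum (hc : ContDiffAt ℝ n c t)
    (hL : ContDiffAt ℝ n L (c t, deriv c t)) (hmn : m + 1 ≤ n) :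
    ContDiffAt ℝ m (conjugateMomentum L c) t := by
  refine ContDiffAt.fderiv (n := n) ?_ (hc.derivWithin hmn) hmn
  exact ContDiffAt.comp (t, deriv c t) (g := L) (f := fun p : ℝ × E => (c p.1, p.2)) hL
    ((hc.comp (t, deriv c t) contDiffAt_fst).prodMk contDiffAt_snd)

theorem continuousAt_lagrangianCovector (hc : ContDiffAt ℝ 2 c t)
    (hL : ContDiffAt ℝ 2 L (c t, deriv c t)) : ContinuousAt (lagrangianCovector L c) t := by
  have hc' : ContDiffAt ℝ 1 (deriv c) t := hc.derivWithin one_add_one_eq_two.le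
  have hx : ContDiffAt ℝ 0 (fun t => fderiv ℝ (fun x => L (x, deriv c t)) (c t)) t := by
    refine ContDiffAt.fderiv (n := 1) ?_ (hc.of_le zero_le_two) (zero_add 1).le
    exact ContDiffAt.comp (t, c t) (g := L) (f := fun p : ℝ × E => (p.2, deriv c p.1))
      (hL.of_le one_le_two) (contDiffAt_snd.prodMk (hc'.comp (t, c t) contDiffAt_fst))
  have hp : ContDiffAt ℝ 0 (deriv (conjugateMomentum L c)) t :=
    (contDiffAt_conjugateMomentum hc hL one_add_one_eq_two.le).derivWithin (zero_add 1).le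
  exact hx.continuousAt.sub hp.continuousAt

/-- The variation vector field `δ(t) = ∂γ/∂s(s₀, t)` of the family of curves `γ(s, ·)`. -/
noncomputable def variationField (γ : ℝ × ℝ → E) (s₀ t : ℝ) : E :=
  deriv (fun s => γ (s, t)) s₀

variable {γ : ℝ × ℝ → E} {s₀ a b : ℝ}

theorem contDiffAt_variationField (hγ : ContDiffAt ℝ n γ (s₀, t)) (hmn : m + 1 ≤ n) :
    ContDiffAt ℝ m (variationField γ s₀) t :=
  (contDiffAt_deriv_prodMk_left hγ hmn).comp t
    (contDiffAt_const.prodMk contDiffAt_id)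

theorem deriv_lagrangian_variation (hγ : ContDiffAt ℝ 2 γ (s₀, t))
    (hL : ContDiffAt ℝ 2 L (γ (s₀, t), deriv (fun τ => γ (s₀, τ)) t)) :
    deriv (fun s => L (γ (s, t), deriv (fun τ => γ (s, τ)) t)) s₀ =
      lagrangianCovector L (fun τ => γ (s₀, τ)) t (variationField γ s₀ t) +
        deriv (fun t => conjugateMomentum L (fun τ => γ (s₀, τ)) t (variationField γ s₀ t)) t := by
  have hc : ContDiffAt ℝ 2 (fun τ => γ (s₀, τ)) t :=
    hγ.comp t (contDiffAt_const.prodMk contDiffAt_id)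
  have hLd := hL.differentiableAt two_ne_zero
  have hposition : HasDerivAt (fun s => γ (s, t)) (variationField γ s₀ t) s₀ :=
    ((hγ.differentiableAt two_ne_zero).comp (f := fun s => (s, t)) s₀ (by fun_prop)).hasDerivAt
  have hvelocity : HasDerivAt (fun s => deriv (fun τ => γ (s, τ)) t)
      (deriv (variationField γ s₀) t) s₀ := by
    have h : DifferentiableAt ℝ (fun s => deriv (fun τ => γ (s, τ)) t) s₀ :=
      ((contDiffAt_deriv_prodMk_right hγ one_add_one_eq_two.le).differentiableAt one_ne_zero).comp
        (f := fun s => (s, t)) s₀ (by fun_prop)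
    convert h.hasDerivAt using 1
    exact (deriv_deriv_prodMk_comm hγ (by simp)).symm
  have hp : DifferentiableAt ℝ (conjugateMomentum L fun τ => γ (s₀, τ)) t :=
    (contDiffAt_conjugateMomentum hc hL one_add_one_eq_two.le).differentiableAt one_ne_zero
  have hδ : DifferentiableAt ℝ (variationField γ s₀) t :=
    (contDiffAt_variationField hγ one_add_one_eq_two.le).differentiableAt one_ne_zero
  have hmomentum : HasDerivAt
      (fun t => conjugateMomentum L (fun τ => γ (s₀, τ)) t (variationField γ s₀ t))
      (deriv (conjugateMomentum L fun τ => γ (s₀, τ)) t (variationField γ s₀ t) +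
        conjugateMomentum L (fun τ => γ (s₀, τ)) t (deriv (variationField γ s₀) t)) t :=
    hp.hasDerivAt.clm_apply hδ.hasDerivAt
  have hchain : HasDerivAt (fun s => L (γ (s, t), deriv (fun τ => γ (s, τ)) t))
      (fderiv ℝ L (γ (s₀, t), deriv (fun τ => γ (s₀, τ)) t)
        (variationField γ s₀ t, deriv (variationField γ s₀) t)) s₀ :=
    hLd.hasFDerivAt.comp_hasDerivAt s₀ (hposition.prodMk hvelocity)
  rw [hchain.deriv, fderiv_apply_prodMk hLd, hmomentum.deriv]
  simp only [lagrangianCovector, conjugateMomentum, sub_apply]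
  ring

theorem hasDerivAt_action_of_contDiffAt (hγ : ∀ t ∈ [[a, b]], ContDiffAt ℝ 2 γ (s₀, t))
    (hL : ∀ t ∈ [[a, b]], ContDiffAt ℝ 2 L (γ (s₀, t), deriv (fun τ => γ (s₀, τ)) t)) :
    HasDerivAt (fun s => ∫ t in a..b, L (γ (s, t), deriv (fun τ => γ (s, τ)) t))
      ((∫ t in a..b, lagrangianCovector L (fun τ => γ (s₀, τ)) t (variationField γ s₀ t))
        + conjugateMomentum L (fun τ => γ (s₀, τ)) b (variationField γ s₀ b)
        - conjugateMomentum L (fun τ => γ (s₀, τ)) a (variationField γ s₀ a))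
      s₀ := by
  let c : ℝ → E := fun τ => γ (s₀, τ)
  let P : ℝ → ℝ := fun t => conjugateMomentum L c t (variationField γ s₀ t)
  have hc : ∀ t ∈ [[a, b]], ContDiffAt ℝ 2 c t := fun t ht =>
    (hγ t ht).comp t (contDiffAt_const.prodMk contDiffAt_id)
  have hδ : ∀ t ∈ [[a, b]], ContDiffAt ℝ 1 (variationField γ s₀) t := fun t ht =>
    contDiffAt_variationField (hγ t ht) one_add_one_eq_two.le
  have hP : ∀ t ∈ [[a, b]], ContDiffAt ℝ 1 P t := fun t ht =>
    (contDiffAt_conjugateMomentum (hc t ht) (hL t ht) one_add_one_eq_two.le).clm_apply (hδ t ht)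
  have hcovector : ContinuousOn (fun t => lagrangianCovector L c t (variationField γ s₀ t))
      [[a, b]] := fun t ht =>
    ((continuousAt_lagrangianCovector (hc t ht) (hL t ht)).clm_apply
      (hδ t ht).continuousAt).continuousWithinAt
  have hP' : ContinuousOn (deriv P) [[a, b]] := fun t ht =>
    ((hP t ht).derivWithin (m := 0) (zero_add 1).le).continuousAt.continuousWithinAt
  have hintegrand : ∀ t ∈ [[a, b]],
      ContDiffAt ℝ 1 (fun q : ℝ × ℝ => L (γ q, deriv (fun τ => γ (q.1, τ)) q.2)) (s₀, t) :=
    fun t ht => ((hL t ht).of_le one_le_two).comp (s₀, t)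
      (((hγ t ht).of_le one_le_two).prodMk
        (contDiffAt_deriv_prodMk_right (hγ t ht) one_add_one_eq_two.le))
  refine (hasDerivAt_intervalIntegral_of_contDiffAt hintegrand).congr_deriv (Eq.symm ?_)
  calc (∫ t in a..b, lagrangianCovector L c t (variationField γ s₀ t)) + P b - P a
      = (∫ t in a..b, lagrangianCovector L c t (variationField γ s₀ t))
          + ∫ t in a..b, deriv P t := by
        rw [integral_deriv_of_contDiffOn_uIcc fun t ht => (hP t ht).contDiffWithinAt, add_sub_assoc]
    _ = ∫ t in a..b, (lagrangianCovector L c t (variationField γ s₀ t) + deriv P t) :=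
        (integral_add hcovector.intervalIntegrable hP'.intervalIntegrable).symm
    _ = ∫ t in a..b, deriv (fun s => L (γ (s, t), deriv (fun τ => γ (s, τ)) t)) s₀ :=
        integral_congr fun t ht => (deriv_lagrangian_variation (hγ t ht) (hL t ht)).symm

end Lagrangian

section Finsler

open Filter
open scoped Topology

variable {E : Type*} [NormedAddCommGroup E] [NormedSpace ℝ E]

theorem fderiv_apply_self_of_posHomogeneous_s11 {W : Type*} [NormedAddCommGroup W] [NormedSpace ℝ W]
    {g : E → W} {y : E} (hg : DifferentiableAt ℝ g y)
    (hhom : ∀ l : ℝ, 0 < l → g (l • y) = l • g y) : fderiv ℝ g y y = g y := by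
  have hray : HasDerivAt (fun l : ℝ => l • y) y 1 := by
    simpa using (hasDerivAt_id (1 : ℝ)).smul_const y
  have hchain : HasDerivAt (fun l : ℝ => g (l • y)) (fderiv ℝ g y y) 1 :=
    HasFDerivAt.comp_hasDerivAt 1 (by simpa using hg.hasFDerivAt) hray
  have hlinear : HasDerivAt (fun l : ℝ => l • g y) (g y) 1 := by
    simpa using (hasDerivAt_id (1 : ℝ)).smul_const (g y)
  have heq : (fun l : ℝ => g (l • y)) =ᶠ[𝓝 1] fun l => l • g y := by
    filter_upwards [lt_mem_nhds one_pos] with l hl using hhom l hl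
  exact hchain.unique (hlinear.congr_of_eventuallyEq heq)

theorem fderiv_fderiv_apply_of_posHomogeneous {X W : Type*} [NormedAddCommGroup X]
    [NormedSpace ℝ X] [NormedAddCommGroup W] [NormedSpace ℝ W] {F : X × E → W} {x : X} {y : E}
    (hF : ContDiffAt ℝ 2 F (x, y))
    (hhom : ∀ (x : X) (l : ℝ), 0 < l → F (x, l • y) = l • F (x, y)) (h : X) :
    fderiv ℝ (fun x => fderiv ℝ (fun y => F (x, y)) y) x h y =
      fderiv ℝ (fun x => F (x, y)) x h := by
  have hslice : ContinuousAt (fun x : X => (x, y)) x := by fun_prop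
  have hDy : DifferentiableAt ℝ (fun x => fderiv ℝ (fun y => F (x, y)) y) x :=
    (ContDiffAt.fderiv (m := 1) (n := 2) (f := fun x y => F (x, y)) (g := fun _ => y)
      hF contDiffAt_const one_add_one_eq_two.le).differentiableAt one_ne_zero
  have heuler : (fun x => fderiv ℝ (fun y => F (x, y)) y y) =ᶠ[𝓝 x] fun x => F (x, y) := by
    filter_upwards [hslice.eventually (hF.eventually (by simp))] with x' hx'
    exact fderiv_apply_self_of_posHomogeneous_s11
      ((hx'.differentiableAt two_ne_zero).comp (f := fun y => (x', y)) y (by fun_prop)) (hhom x')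
  rw [← heuler.fderiv_eq, fderiv_clm_apply hDy (by fun_prop)]
  simp

/-- The Finslerian Euler–Lagrange covector `h ↦ D_x(D_yF)(h)(σ′) - d/dt (D_yF(h))`: the notion
`eulerLagrange` over an arbitrary real normed space. -/
noncomputable def finslerCovector (F : E × E → ℝ) (σ : ℝ → E) (t : ℝ) (h : E) : ℝ :=
  fderiv ℝ (fun x => fderiv ℝ (fun y => F (x, y)) (deriv σ t)) (σ t) h (deriv σ t)
    - deriv (fun s => fderiv ℝ (fun y => F (σ s, y)) (deriv σ s) h) t

variable {F : E × E → ℝ} {σ c : ℝ → E} {t : ℝ}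

theorem finslerCovector_congr (h : σ =ᶠ[𝓝 t] c) :
    finslerCovector F σ t = finslerCovector F c t := by
  have hmomentum : conjugateMomentum F σ =ᶠ[𝓝 t] conjugateMomentum F c := by
    filter_upwards [h, h.deriv] with s hs hs'
    simp only [conjugateMomentum, hs, hs']
  ext v
  have hv : (fun s => conjugateMomentum F σ s v) =ᶠ[𝓝 t] fun s => conjugateMomentum F c s v :=
    hmomentum.mono fun s hs => by simp only [hs]
  simp only [finslerCovector, h.eq_of_nhds, h.deriv_eq]
  exact congrArg _ hv.deriv_eq

theorem finslerCovector_eq_lagrangianCovector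
    (hhom : ∀ (x y : E) (l : ℝ), 0 < l → F (x, l • y) = l * F (x, y))
    (hc : ContDiffAt ℝ 2 c t) (hF : ContDiffAt ℝ 2 F (c t, deriv c t)) (h : E) :
    finslerCovector F c t h = lagrangianCovector F c t h := by
  have hmomentum : DifferentiableAt ℝ (conjugateMomentum F c) t :=
    (contDiffAt_conjugateMomentum hc hF one_add_one_eq_two.le).differentiableAt one_ne_zero
  have hmomentum_apply : deriv (fun s => conjugateMomentum F c s h) t =
      deriv (conjugateMomentum F c) t h := by
    simpa using (hmomentum.hasDerivAt.clm_apply (hasDerivAt_const t h)).deriv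
  rw [finslerCovector, fderiv_fderiv_apply_of_posHomogeneous hF fun x => hhom x _]
  exact congrArg _ hmomentum_apply

theorem first_variation_formula_general
    (hhom : ∀ (x y : E) (l : ℝ), 0 < l → F (x, l • y) = l * F (x, y))
    {t₁ t₂ : ℝ} (ht : t₁ < t₂) (hσ : ∀ t ∈ Set.Icc t₁ t₂, DifferentiableAt ℝ σ t)
    (hF : ∀ t ∈ Set.Icc t₁ t₂, ContDiffAt ℝ 2 F (σ t, deriv σ t))
    {γ : ℝ × ℝ → E} (hγ : ∀ t ∈ Set.Icc t₁ t₂, ContDiffAt ℝ 2 γ (0, t))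
    (hγ0 : ∀ t ∈ Set.Icc t₁ t₂, γ (0, t) = σ t) :
    HasDerivAt (fun s => ∫ t in t₁..t₂, F (γ (s, t), deriv (fun τ => γ (s, τ)) t))
      ((∫ t in t₁..t₂, finslerCovector F σ t (deriv (fun s => γ (s, t)) 0))
        + fderiv ℝ (fun y => F (σ t₂, y)) (deriv σ t₂) (deriv (fun s => γ (s, t₂)) 0)
        - fderiv ℝ (fun y => F (σ t₁, y)) (deriv σ t₁) (deriv (fun s => γ (s, t₁)) 0))
      0 := by
  let c : ℝ → E := fun τ => γ (0, τ)
  have hcσ : ∀ t ∈ Set.Icc t₁ t₂, c t = σ t := hγ0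
  have hc : ∀ t ∈ Set.Icc t₁ t₂, ContDiffAt ℝ 2 c t := fun t ht =>
    (hγ t ht).comp t (contDiffAt_const.prodMk contDiffAt_id)
  have hderiv : ∀ t ∈ Set.Icc t₁ t₂, deriv c t = deriv σ t := fun t hti =>
    (uniqueDiffOn_Icc ht t hti).eq_deriv _
      (((hc t hti).differentiableAt two_ne_zero).hasDerivAt.hasDerivWithinAt)
      ((hσ t hti).hasDerivAt.hasDerivWithinAt.congr hcσ (hcσ t hti))
  have hFc : ∀ t ∈ Set.Icc t₁ t₂, ContDiffAt ℝ 2 F (c t, deriv c t) := fun t hti => by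
    rw [hderiv t hti, hcσ t hti]
    exact hF t hti
  have hmomentum : ∀ t ∈ Set.Icc t₁ t₂, conjugateMomentum F c t = conjugateMomentum F σ t :=
    fun t hti => by simp only [conjugateMomentum, hderiv t hti, hcσ t hti]
  -- `σ` and `γ(0, ·)` agree only on `[t₁, t₂]`, so their covectors are compared in its interior.
  have hcovector : Set.EqOn (fun t => lagrangianCovector F c t (variationField γ 0 t))
      (fun t => finslerCovector F σ t (variationField γ 0 t)) (Set.Ioo t₁ t₂) := fun t hti => by
    have hti' := Set.Ioo_subset_Icc_self hti
    have hσc : σ =ᶠ[𝓝 t] c := by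
      filter_upwards [Icc_mem_nhds hti.1 hti.2] with τ hτ using (hcσ τ hτ).symm
    simp only [finslerCovector_congr hσc,
      finslerCovector_eq_lagrangianCovector hhom (hc t hti') (hFc t hti')]
  have haction := hasDerivAt_action_of_contDiffAt (L := F) (Set.uIcc_of_le ht.le ▸ hγ)
    (Set.uIcc_of_le ht.le ▸ hFc)
  rwa [integral_congr_Ioo_of_le ht.le hcovector, hmomentum t₁ (Set.left_mem_Icc.2 ht.le),
    hmomentum t₂ (Set.right_mem_Icc.2 ht.le)] at haction

end Finsler

/-- **Integral first variation formula for first-order mechanics.**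
For a smooth variation `γ` of a regular curve `σ` with variation vector field
`δ(t) = ∂γ/∂s(0, t)`, the action `A(s) = ∫_{t₁}^{t₂} F(γ(s,t), ∂γ/∂t(s,t)) dt` is
differentiable at `s = 0` with
`A′(0) = ∫_{t₁}^{t₂} E(t)(δ t) dt + D_yF(σ t₂, σ′ t₂)(δ t₂) − D_yF(σ t₁, σ′ t₁)(δ t₁)`. -/
theorem first_variation_formula
    (n : ℕ) (F : EuclideanSpace ℝ (Fin n) × EuclideanSpace ℝ (Fin n) → ℝ)
    (hhom : ∀ (x y : EuclideanSpace ℝ (Fin n)) (l : ℝ), 0 < l → F (x, l • y) = l * F (x, y))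
    (hFcont : Continuous F)
    (hFsmooth : ContDiffOn ℝ (⊤ : ℕ∞) F
      {p : EuclideanSpace ℝ (Fin n) × EuclideanSpace ℝ (Fin n) | p.2 ≠ 0})
    (t₁ t₂ : ℝ) (ht : t₁ < t₂)
    (σ : ℝ → EuclideanSpace ℝ (Fin n)) (hσ : ContDiff ℝ (⊤ : ℕ∞) σ)
    (hreg : ∀ t ∈ Set.Icc t₁ t₂, deriv σ t ≠ 0)
    (γ : ℝ × ℝ → EuclideanSpace ℝ (Fin n)) (hγ : ContDiff ℝ (⊤ : ℕ∞) γ)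
    (hγ0 : ∀ t ∈ Set.Icc t₁ t₂, γ (0, t) = σ t) :
    HasDerivAt (fun s => ∫ t in t₁..t₂, F (γ (s, t), deriv (fun τ => γ (s, τ)) t))
      ((∫ t in t₁..t₂, eulerLagrange n F σ t (deriv (fun s => γ (s, t)) 0))
        + fderiv ℝ (fun y => F (σ t₂, y)) (deriv σ t₂) (deriv (fun s => γ (s, t₂)) 0)
        - fderiv ℝ (fun y => F (σ t₁, y)) (deriv σ t₁) (deriv (fun s => γ (s, t₁)) 0))
      0 := by
  exact first_variation_formula_general hhom ht
    (fun t _ => hσ.differentiable (by simp) t)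
    (fun t hti => (hFsmooth.contDiffAt
      ((isOpen_ne.preimage continuous_snd).mem_nhds (hreg t hti))).of_le (by norm_cast))
    (fun t _ => hγ.contDiffAt.of_le (by norm_cast)) hγ0
end
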